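/- Let Λ and Λ' be lattices in ℂ, both with complex multiplication by R, such that g₂(Λ), g₃(Λ), g₂(Λ'), g₃(Λ') are all algebraic over ℚ. Let α ∈ ℂ be nonzero and algebraic over ℚ with α·Λ ⊆ Λ'. Let M and M' be lattices in ℂ satisfying g₂(M) = σ(g₂(Λ)), g₃(M) = σ(g₃(Λ)), g₂(M') = σ(g₂(Λ')), g₃(M') = σ(g₃(Λ')). Then σ(α)·M ⊆ M'. -/

import Mathlib

open NumberField

/-- The Eisenstein series `g₂` of an additive subgroup of `ℂ`. -/
noncomputable def g₂ (Λ : AddSubgroup ℂ) : ℂ :=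
  60 * ∑' w : {w : ℂ // w ∈ Λ ∧ w ≠ 0}, ((w : ℂ) ^ 4)⁻¹

/-- The Eisenstein series `g₃` of an additive subgroup of `ℂ`. -/
noncomputable def g₃ (Λ : AddSubgroup ℂ) : ℂ :=
  140 * ∑' w : {w : ℂ // w ∈ Λ ∧ w ≠ 0}, ((w : ℂ) ^ 6)⁻¹

open PowerSeries in
/-- The Weierstrass ODE operator for `u = z^2 ℘`. -/
noncomputable def wODE {R : Type*} [CommRing R] (a b : R) (U : PowerSeries R) : PowerSeries R :=
  (X * derivative R U - 2 * U) ^ 2 - 4 * U ^ 3 + C a * X ^ 4 * U + C b * X ^ 6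

open PowerSeries in
lemma wODE_map {R S : Type*} [CommRing R] [CommRing S] (f : R →+* S) (a b : R)
    (U : PowerSeries R) : PowerSeries.map f (wODE a b U) = wODE (f a) (f b) (PowerSeries.map f U) := by
  have h : PowerSeries.map f (derivative R U) = derivative S (PowerSeries.map f U) := by
    ext n
    simp [coeff_derivative]
  have h2 : PowerSeries.map f (2 : PowerSeries R) = 2 := map_ofNat _ 2
  have h4 : PowerSeries.map f (4 : PowerSeries R) = 4 := map_ofNat _ 4
  simp [wODE, h, h2, h4]

open PowerSeries in
lemma wODE_coeff {R : Type*} [CommRing R] (a b : R) (U V : PowerSeries R) (n : ℕ)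
    (hU : constantCoeff U = 1) (hV : constantCoeff V = 1)
    (h : ∀ i < n, coeff i U = coeff i V) :
    coeff n (wODE a b U) - coeff n (wODE a b V) = -4 * (n + 1) * (coeff n U - coeff n V) := by
  obtain ⟨E, hE⟩ : (X : PowerSeries R) ^ n ∣ U - V := by
    rw [X_pow_dvd_iff]
    intro m hm
    simp [h m hm]
  have hUV : U = V + X ^ n * E := by rw [← hE]; ring
  have hd : X * derivative R (X ^ n * E) = X ^ n * ((n : PowerSeries R) * E + X * derivative R E) := by
    rw [Derivation.leibniz, derivative_pow, derivative_X]
    rcases n with _ | n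
    · simp
    · simp only [smul_eq_mul, Nat.add_sub_cancel]
      ring
  have hDU : X * derivative R U = X * derivative R V +
      X ^ n * ((n : PowerSeries R) * E + X * derivative R E) := by
    rw [← hd, ← mul_add, ← map_add, ← hUV]
  have key : wODE a b U - wODE a b V = X ^ n * (
      ((n : PowerSeries R) * E + X * derivative R E - 2 * E) *
        (X * derivative R U - 2 * U + (X * derivative R V - 2 * V))
      - 4 * E * (U ^ 2 + U * V + V ^ 2) + C a * X ^ 4 * E) := by
    unfold wODE
    rw [hDU]
    generalize derivative R V = V'
    generalize derivative R E = E'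
    rw [hUV]
    ring
  rw [← map_sub, key, ← map_sub, hE]
  have e1 : ∀ W : PowerSeries R, coeff n (X ^ n * W) = constantCoeff W := by
    intro W
    have := coeff_X_pow_mul W n 0
    simpa using this
  rw [e1, e1]
  have h2 : constantCoeff (2 : PowerSeries R) = 2 := map_ofNat _ 2
  have h4 : constantCoeff (4 : PowerSeries R) = 4 := map_ofNat _ 4
  simp [hU, hV, h2, h4]
  ring

open PowerSeries in
lemma wODE_unique {R : Type*} [Field R] [CharZero R] (a b : R) (U V : PowerSeries R)
    (hU : constantCoeff U = 1) (hV : constantCoeff V = 1)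
    (h1 : wODE a b U = 0) (h2 : wODE a b V = 0) : U = V := by
  ext n
  induction n using Nat.strong_induction_on with
  | _ n ih =>
    have := wODE_coeff a b U V n hU hV ih
    rw [h1, h2] at this
    have hn : (-4 * ((n : R) + 1)) ≠ 0 := by
      have : ((n : R) + 1) ≠ 0 := by exact_mod_cast n.succ_ne_zero
      simp [this]
    simp only [map_zero, sub_zero] at this
    exact sub_eq_zero.mp ((mul_eq_zero.mp this.symm).resolve_left hn)

open PowerSeries in
lemma wODE_lift {F R : Type*} [Field F] [Field R] [CharZero R] (i : F →+* R) (a b : F)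
    (U : PowerSeries R) (hU : constantCoeff U = 1) (h1 : wODE (i a) (i b) U = 0) :
    ∃ V : PowerSeries F, PowerSeries.map i V = U ∧ constantCoeff V = 1 ∧ wODE a b V = 0 := by
  have hr : ∀ n, ∃ x, i x = coeff n U := by
    intro n
    induction n using Nat.strong_induction_on with
    | _ n ih =>
      rcases Nat.eq_zero_or_pos n with rfl | hn0
      · exact ⟨1, by simp [hU]⟩
      choose! c hc using ih
      set V : PowerSeries F := PowerSeries.mk fun k => if k < n then c k else 0 with hVd
      have hVc : ∀ k < n, coeff k U = coeff k (PowerSeries.map i V) := by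
        intro k hk
        simp [hVd, hk, hc k hk]
      have hV0 : constantCoeff (PowerSeries.map i V) = 1 := by
        rw [← hU, ← coeff_zero_eq_constantCoeff_apply, ← coeff_zero_eq_constantCoeff_apply,
          hVc 0 hn0]
      have hVn : coeff n (PowerSeries.map i V) = 0 := by simp [hVd]
      have := wODE_coeff (i a) (i b) U _ n hU hV0 hVc
      rw [h1, hVn, ← wODE_map] at this
      simp only [coeff_map, map_zero, sub_zero, zero_sub] at this
      have hn : (4 * ((n : R) + 1)) ≠ 0 := by
        have : ((n : R) + 1) ≠ 0 := by exact_mod_cast n.succ_ne_zero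
        simp [this]
      refine ⟨coeff n (wODE a b V) / (4 * (n + 1)), ?_⟩
      simp only [map_div₀, map_mul, map_add, map_natCast, map_one, map_ofNat]
      rw [div_eq_iff hn]
      linear_combination -this
  choose c hc using hr
  have hm : PowerSeries.map i (PowerSeries.mk c) = U := by
    ext n; simp [hc]
  have hinj : Function.Injective (PowerSeries.map i) := by
    intro p q hpq
    ext n
    apply i.injective
    simpa using congrArg (coeff n) hpq
  refine ⟨PowerSeries.mk c, hm, ?_, ?_⟩
  · apply i.injective
    have h0 := hc 0
    rw [coeff_zero_eq_constantCoeff_apply, hU] at h0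
    simpa using h0
  · apply hinj
    rw [wODE_map, hm, h1, map_zero]

open PowerSeries in
/-- Homogenised evaluation `∑ A_k U^k X^(2(N-k))`. -/
noncomputable def homEv {R : Type*} [CommRing R] (N : ℕ) (A : ℕ → R) (U : PowerSeries R) :
    PowerSeries R :=
  ∑ k ∈ Finset.range (N + 1), C (A k) * (U ^ k * X ^ (2 * (N - k)))

open PowerSeries in
lemma homEv_map {R S : Type*} [CommRing R] [CommRing S] (f : R →+* S) (N : ℕ) (A : ℕ → R)
    (U : PowerSeries R) :
    PowerSeries.map f (homEv N A U) = homEv N (fun k => f (A k)) (PowerSeries.map f U) := by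
  simp [homEv, map_sum]

open PowerSeries in
lemma homEv_descent {F : Type*} [Field F] (i : F →+* ℂ) (N : ℕ) (A B : ℕ → ℂ)
    (U W : PowerSeries F) (k0 : ℕ) (hB : B k0 ≠ 0)
    (h : X ^ 2 * homEv N A (PowerSeries.map i U) =
      homEv N B (PowerSeries.map i U) * PowerSeries.map i W) :
    ∃ A' B' : ℕ → F, B' k0 ≠ 0 ∧ X ^ 2 * homEv N A' U = homEv N B' U * W := by
  let _ : Algebra F ℂ := i.toAlgebra
  obtain ⟨φ, hφ⟩ : ∃ φ : Module.Dual F ℂ, φ (B k0) ≠ 0 := by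
    by_contra! hc
    exact hB ((Module.forall_dual_apply_eq_zero_iff F _).mp hc)
  have hφm : ∀ (x : ℂ) (y : F), φ (x * i y) = φ x * y := by
    intro x y
    have : x * i y = y • x := by rw [Algebra.smul_def, mul_comm]; rfl
    rw [this, map_smul, smul_eq_mul, mul_comm]
  refine ⟨fun k => φ (A k), fun k => φ (B k), hφ, ?_⟩
  ext n
  have hn := congrArg (fun P => φ (coeff n P)) h
  simp only [homEv, Finset.mul_sum, Finset.sum_mul, map_sum] at hn ⊢
  have e1 : ∀ k, coeff n ((X : PowerSeries ℂ) ^ 2 * (C (A k) *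
      (PowerSeries.map i U ^ k * X ^ (2 * (N - k))))) =
      A k * i (coeff n (X ^ 2 * (U ^ k * X ^ (2 * (N - k))))) := by
    intro k
    rw [← coeff_map, mul_left_comm, coeff_C_mul]
    simp
  have e2 : ∀ k, coeff n ((C (B k) *
      (PowerSeries.map i U ^ k * X ^ (2 * (N - k)))) * PowerSeries.map i W) =
      B k * i (coeff n ((U ^ k * X ^ (2 * (N - k))) * W)) := by
    intro k
    rw [← coeff_map, mul_assoc, coeff_C_mul]
    simp
  simp only [e1, e2, hφm] at hn
  convert hn using 2
  · rw [mul_left_comm, coeff_C_mul]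
  · rw [mul_assoc, coeff_C_mul]

open Topology Filter in
lemma iteratedDeriv_scale (f : ℂ → ℂ) (c : ℂ) (n : ℕ) :
    iteratedDeriv n (fun x => f (c * x)) = fun x => c ^ n * iteratedDeriv n f (c * x) := by
  induction n with
  | zero => simp
  | succ n ih =>
    rw [iteratedDeriv_succ, ih]
    funext x
    rw [deriv_const_mul_field, deriv_comp_mul_left c (iteratedDeriv n f) x, iteratedDeriv_succ]
    simp only [smul_eq_mul]
    ring

/-- Analytic at `0` with Taylor series `P`. -/
def HasT (f : ℂ → ℂ) (P : PowerSeries ℂ) : Prop :=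
  AnalyticAt ℂ f 0 ∧ ∀ n, iteratedDeriv n f 0 = n.factorial * PowerSeries.coeff n P

lemma HasT.exists {f : ℂ → ℂ} (hf : AnalyticAt ℂ f 0) : ∃ P, HasT f P := by
  refine ⟨PowerSeries.mk fun n => iteratedDeriv n f 0 / n.factorial, hf, fun n => ?_⟩
  have : (n.factorial : ℂ) ≠ 0 := by exact_mod_cast n.factorial_ne_zero
  simp
  field_simp

open Topology Filter in
lemma HasT.congr {f g : ℂ → ℂ} {P} (hf : HasT f P) (h : f =ᶠ[𝓝 0] g) : HasT g P :=
  ⟨hf.1.congr h, fun n => by rw [← hf.2 n, h.iteratedDeriv_eq n]⟩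

lemma HasT.unique {f : ℂ → ℂ} {P Q} (hf : HasT f P) (hg : HasT f Q) : P = Q := by
  ext n
  have : (n.factorial : ℂ) ≠ 0 := by exact_mod_cast n.factorial_ne_zero
  exact mul_left_cancel₀ this ((hf.2 n).symm.trans (hg.2 n))

lemma HasT.add {f g : ℂ → ℂ} {P Q} (hf : HasT f P) (hg : HasT g Q) :
    HasT (fun z => f z + g z) (P + Q) := by
  refine ⟨hf.1.add hg.1, fun n => ?_⟩
  have := iteratedDeriv_add (n := n) hf.1.contDiffAt hg.1.contDiffAt
  rw [map_add, mul_add, ← hf.2, ← hg.2, ← this]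
  rfl

lemma HasT.mul {f g : ℂ → ℂ} {P Q} (hf : HasT f P) (hg : HasT g Q) :
    HasT (fun z => f z * g z) (P * Q) := by
  refine ⟨hf.1.mul hg.1, fun n => ?_⟩
  rw [iteratedDeriv_fun_mul hf.1.contDiffAt hg.1.contDiffAt, PowerSeries.coeff_mul,
    Finset.Nat.sum_antidiagonal_eq_sum_range_succ
      (fun i j => PowerSeries.coeff i P * PowerSeries.coeff j Q), Finset.mul_sum]
  refine Finset.sum_congr rfl fun i hi => ?_
  rw [hf.2, hg.2, ← Nat.choose_mul_factorial_mul_factorial (Finset.mem_range_succ_iff.mp hi)]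
  push_cast
  ring

lemma HasT.const (c : ℂ) : HasT (fun _ => c) (PowerSeries.C c) := by
  refine ⟨analyticAt_const, fun n => ?_⟩
  rw [iteratedDeriv_const, PowerSeries.coeff_C]
  rcases n with _ | n <;> simp

lemma HasT.id : HasT (fun z => z) PowerSeries.X := by
  refine ⟨analyticAt_id, fun n => ?_⟩
  rw [iteratedDeriv_fun_id_zero, PowerSeries.coeff_X]
  split_ifs with h
  · simp [h]
  · simp

lemma HasT.pow {f : ℂ → ℂ} {P} (hf : HasT f P) (n : ℕ) : HasT (fun z => f z ^ n) (P ^ n) := by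
  induction n with
  | zero => simpa using HasT.const 1
  | succ n ih => simpa [pow_succ] using ih.mul hf

lemma HasT.sum {ι : Type*} (s : Finset ι) {f : ι → ℂ → ℂ} {P : ι → PowerSeries ℂ}
    (h : ∀ i, HasT (f i) (P i)) : HasT (fun z => ∑ i ∈ s, f i z) (∑ i ∈ s, P i) := by
  classical
  induction s using Finset.induction_on with
  | empty => simpa using HasT.const 0
  | insert a s ha ih => simpa [Finset.sum_insert ha] using (h a).add ih

lemma HasT.deriv {f : ℂ → ℂ} {P} (hf : HasT f P) :
    HasT (_root_.deriv f) (PowerSeries.derivative ℂ P) := by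
  refine ⟨hf.1.deriv, fun n => ?_⟩
  rw [← iteratedDeriv_succ', hf.2, PowerSeries.coeff_derivative, Nat.factorial_succ]
  push_cast
  ring

lemma HasT.scale {f : ℂ → ℂ} {P} (hf : HasT f P) (c : ℂ) :
    HasT (fun z => f (c * z)) (PowerSeries.rescale c P) := by
  refine ⟨?_, fun n => ?_⟩
  · have h0 : AnalyticAt ℂ f (c * 0) := by simpa using hf.1
    exact AnalyticAt.fun_comp (f := fun z => c * z) h0 (by fun_prop)
  · rw [iteratedDeriv_scale]
    simp only [mul_zero, hf.2, PowerSeries.coeff_rescale]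
    ring

open Topology Filter in
lemma HasT.eventually_eq {f g : ℂ → ℂ} {P} (hf : HasT f P) (hg : HasT g P) : f =ᶠ[𝓝 0] g := by
  have h := hf.add ((HasT.const (-1)).mul hg)
  have h0 : P + PowerSeries.C (-1) * P = 0 := by simp
  rw [h0] at h
  have hs := h.1.hasFPowerSeriesAt
  have hz : (FormalMultilinearSeries.ofScalars ℂ
      (fun n ↦ iteratedDeriv n (fun z => f z + -1 * g z) 0 / (n.factorial : ℂ))) = 0 := by
    ext n
    simp only [h.2]
    simp
  rw [hz] at hs
  filter_upwards [hs.eventually_eq_zero] with z hz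
  linear_combination hz

/-- `z^2 ℘(z)`, with the singularity at `0` removed. -/
noncomputable def wu (L : PeriodPair) (z : ℂ) : ℂ := z ^ 2 * L.weierstrassPExcept 0 z + 1

lemma wu_eq (L : PeriodPair) {z : ℂ} (hz : z ≠ 0) : wu L z = z ^ 2 * L.weierstrassP z := by
  have := L.weierstrassPExcept_def 0 z
  simp only [ZeroMemClass.coe_zero] at this
  rw [wu, this]
  field_simp
  simp
  ring

lemma wu_zero (L : PeriodPair) : wu L 0 = 1 := by simp [wu]

lemma wu_analytic (L : PeriodPair) : AnalyticAt ℂ (wu L) 0 := by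
  have := L.analyticAt_weierstrassPExcept 0
  unfold wu
  fun_prop

open Topology Filter in
lemma wu_ode (L : PeriodPair) : ∀ᶠ z in 𝓝 (0 : ℂ),
    (z * deriv (wu L) z + (-2) * wu L z) ^ 2 + (-4) * wu L z ^ 3 + L.g₂ * z ^ 4 * wu L z
      + L.g₃ * z ^ 6 = 0 := by
  filter_upwards [L.compl_lattice_sdiff_singleton_mem_nhds 0] with z hz
  by_cases h0 : z = 0
  · subst h0; simp [wu_zero]; norm_num
  have hzL : z ∉ L.lattice := fun h => hz ⟨h, h0⟩
  have hd : deriv (wu L) z = 2 * z * L.weierstrassP z + z ^ 2 * L.derivWeierstrassP z := by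
    have he : wu L =ᶠ[𝓝 z] fun z => z ^ 2 * L.weierstrassP z := by
      filter_upwards [isOpen_ne.mem_nhds h0] with w hw using wu_eq L hw
    rw [he.deriv_eq]
    have hp : HasDerivAt L.weierstrassP (L.derivWeierstrassP z) z := by
      rw [← L.deriv_weierstrassP]
      exact ((L.analyticOnNhd_weierstrassP z hzL).differentiableAt).hasDerivAt
    have := ((hasDerivAt_pow 2 z).fun_mul hp).deriv
    simpa using this
  rw [hd, wu_eq L h0]
  linear_combination z ^ 6 * L.derivWeierstrassP_sq z hzL

lemma polyP_mero (L : PeriodPair) (A : Polynomial ℂ) :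
    Meromorphic (fun z => A.eval (L.weierstrassP z)) := by
  simp only [Polynomial.eval_eq_sum_range]
  fun_prop

lemma polyP_an (L : PeriodPair) (A : Polynomial ℂ) {z : ℂ} (hz : z ∉ L.lattice) :
    AnalyticAt ℂ (fun z => A.eval (L.weierstrassP z)) z := by
  have := L.analyticOnNhd_weierstrassP z hz
  simp only [Polynomial.eval_eq_sum_range]
  fun_prop

lemma mord_add (L : PeriodPair) (g : ℂ → ℂ) (hper : ∀ z, ∀ l ∈ L.lattice, g (z + l) = g z)
    (l : ℂ) (hl : l ∈ L.lattice) : meromorphicOrderAt g l = meromorphicOrderAt g 0 := by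
  have h := meromorphicOrderAt_comp_add_const_eq_meromorphicOrderAt (x := 0) (c := l) (f := g)
  have e : (fun z => g (z + l)) = g := by funext z; exact hper z l hl
  rw [zero_add] at h
  rw [← h]
  congr 1

lemma P_per (L : PeriodPair) (z : ℂ) (l : ℂ) (hl : l ∈ L.lattice) :
    L.weierstrassP (z + l) = L.weierstrassP z := L.weierstrassP_add_coe z ⟨l, hl⟩

open Topology Filter in
lemma ell_liouville (L : PeriodPair) (g : ℂ → ℂ) (hg : Meromorphic g)
    (hper : ∀ z, ∀ l ∈ L.lattice, g (z + l) = g z)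
    (hord : ∀ z, 0 ≤ meromorphicOrderAt g z) : ∃ c, ∀ᶠ z in 𝓝[≠] (0 : ℂ), g z = c := by
  have hgo : MeromorphicOn g Set.univ := fun z _ => hg z
  set h := toMeromorphicNFOn g Set.univ with hh
  have heq : ∀ z, g =ᶠ[𝓝[≠] z] h := fun z =>
    (hgo.toMeromorphicNFOn_eq_self_on_nhdsNE (Set.mem_univ z)).symm
  have han : ∀ z, AnalyticAt ℂ h z := by
    intro z
    rw [← (meromorphicNFOn_toMeromorphicNFOn g Set.univ
      (Set.mem_univ z)).meromorphicOrderAt_nonneg_iff_analyticAt,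
      meromorphicOrderAt_toMeromorphicNFOn hgo (Set.mem_univ z)]
    exact hord z
  have hdiff : Differentiable ℂ h := fun z => (han z).differentiableAt
  have hcont := hdiff.continuous
  have hpr : ∀ z, ∀ l ∈ L.lattice, h (z + l) = h z := by
    intro z l hl
    have ht : Tendsto (fun w => w + l) (𝓝[≠] z) (𝓝[≠] (z + l)) := by
      refine tendsto_nhdsWithin_iff.mpr ⟨?_, ?_⟩
      · exact ((continuous_add_const l).tendsto z).mono_left nhdsWithin_le_nhds
      · filter_upwards [self_mem_nhdsWithin] with w hw
        simpa using hw
    have h1 : (fun w => h (w + l)) =ᶠ[𝓝[≠] z] h := by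
      filter_upwards [ht.eventually (heq (z + l)), heq z] with w h1 h2
      rw [← h1, ← h2, hper w l hl]
    have t1 : Tendsto (fun w => h (w + l)) (𝓝[≠] z) (𝓝 (h (z + l))) :=
      ((hcont.comp (continuous_add_const l)).tendsto z).mono_left nhdsWithin_le_nhds
    have t2 : Tendsto h (𝓝[≠] z) (𝓝 (h z)) := (hcont.tendsto z).mono_left nhdsWithin_le_nhds
    exact tendsto_nhds_unique (t1.congr' h1) t2
  refine ⟨h 0, ?_⟩
  filter_upwards [heq 0] with z hz
  rw [hz]
  exact hdiff.apply_eq_apply_of_bounded (IsZLattice.isCompact_range_of_periodic L.lattice _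
    hcont fun z w hw ↦ hpr z w hw).isBounded z 0

open Topology Filter in
lemma even_order (g : ℂ → ℂ) (hg : MeromorphicAt g 0) (hev : ∀ z, g (-z) = g z) (m : ℤ)
    (hm : Odd m) : meromorphicOrderAt g 0 ≠ m := by
  intro h
  rw [meromorphicOrderAt_eq_int_iff hg] at h
  obtain ⟨k, hk, hk0, hke⟩ := h
  simp only [sub_zero, smul_eq_mul] at hke
  have ht : Tendsto (fun w : ℂ => -w) (𝓝[≠] 0) (𝓝[≠] 0) := by
    refine tendsto_nhdsWithin_iff.mpr ⟨?_, ?_⟩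
    · have := (continuous_neg.tendsto (0 : ℂ)).mono_left (nhdsWithin_le_nhds (s := {0}ᶜ))
      simpa using this
    · filter_upwards [self_mem_nhdsWithin] with w hw
      simpa using hw
  have h1 : (fun w => k (-w)) =ᶠ[𝓝[≠] 0] fun w => - k w := by
    filter_upwards [hke, ht.eventually hke, self_mem_nhdsWithin] with w h1 h2 h3
    rw [hev, h1, hm.neg_zpow] at h2
    have : w ^ m ≠ 0 := zpow_ne_zero _ h3
    apply mul_left_cancel₀ this
    linear_combination h2
  have t2 : Tendsto k (𝓝[≠] 0) (𝓝 (k 0)) := hk.continuousAt.tendsto.mono_left nhdsWithin_le_nhds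
  have := tendsto_nhds_unique ((t2.comp ht).congr' h1) t2.neg
  apply hk0
  linear_combination this / 2

open Topology Filter in
lemma even_poly (L : PeriodPair) (n : ℕ) : ∀ g : ℂ → ℂ, Meromorphic g →
    (∀ z, ∀ l ∈ L.lattice, g (z + l) = g z) → (∀ z, g (-z) = g z) →
    (∀ z ∉ L.lattice, 0 ≤ meromorphicOrderAt g z) →
    (((-2 * n : ℤ) : WithTop ℤ) ≤ meromorphicOrderAt g 0) →
    ∃ A : Polynomial ℂ, ∀ᶠ z in 𝓝[≠] (0 : ℂ), g z = A.eval (L.weierstrassP z) := by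
  induction n with
  | zero =>
    intro g hg hper _ hord h0
    obtain ⟨c, hc⟩ := ell_liouville L g hg hper (fun z => by
      by_cases hz : z ∈ L.lattice
      · rw [mord_add L g hper z hz]; simpa using h0
      · exact hord z hz)
    exact ⟨Polynomial.C c, by simpa using hc⟩
  | succ n ih =>
    intro g hg hper hev hord h0
    have hPm := L.meromorphic_weierstrassP
    have hpow : MeromorphicAt (fun z : ℂ => z ^ (2 * n + 2)) 0 := by fun_prop
    have hpo : meromorphicOrderAt (fun z : ℂ => z ^ (2 * n + 2)) 0 = ((2 * n + 2 : ℤ) : WithTop ℤ) := by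
      have := fun_meromorphicOrderAt_pow_id_sub_const (𝕜 := ℂ) (x := 0) (n := 2 * n + 2)
      simp only [sub_zero] at this
      rw [this]
      norm_cast
    have h1 : 0 ≤ meromorphicOrderAt (fun z => z ^ (2 * n + 2) * g z) 0 := by
      rw [fun_meromorphicOrderAt_mul hpow (hg 0), hpo]
      generalize meromorphicOrderAt g 0 = o at h0
      induction o with
      | top => simp
      | coe o => norm_cast at h0 ⊢; push_cast at h0; omega
    obtain ⟨c, hc⟩ := tendsto_nhds_of_meromorphicOrderAt_nonneg (by fun_prop) h1
    have hu : Tendsto (fun z => z ^ (2 * n + 2) * L.weierstrassP z ^ (n + 1)) (𝓝[≠] 0) (𝓝 1) := by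
      have t : Tendsto (wu L) (𝓝[≠] 0) (𝓝 (wu L 0)) :=
        (wu_analytic L).continuousAt.tendsto.mono_left nhdsWithin_le_nhds
      rw [wu_zero] at t
      have t2 := t.pow (n + 1)
      rw [one_pow] at t2
      refine t2.congr' ?_
      filter_upwards [self_mem_nhdsWithin] with z hz
      rw [wu_eq L hz]
      ring
    set g' : ℂ → ℂ := fun z => g z - c * L.weierstrassP z ^ (n + 1) with hg'
    have hg'm : Meromorphic g' := by fun_prop
    have h2 : 0 < meromorphicOrderAt (fun z => z ^ (2 * n + 2) * g' z) 0 := by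
      rw [← tendsto_zero_iff_meromorphicOrderAt_pos (by fun_prop)]
      have := hc.sub (hu.const_mul c)
      rw [mul_one, sub_self] at this
      refine this.congr fun z => ?_
      simp only [hg']; ring
    rw [fun_meromorphicOrderAt_mul hpow (hg'm 0), hpo] at h2
    have hev' : ∀ z, g' (-z) = g' z := by intro z; simp [hg', hev]
    have h3 := even_order g' (hg'm 0) hev' (-2 * n - 1) (by
      refine ⟨-n - 1, by ring⟩)
    obtain ⟨A, hA⟩ := ih g' hg'm
      (by intro z l hl; simp only [hg', hper z l hl, P_per L z l hl]) hev'
      (by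
        intro z hz
        have h5 := hord z hz
        have : AnalyticAt ℂ (fun z => - (c * L.weierstrassP z ^ (n + 1))) z := by
          have := L.analyticOnNhd_weierstrassP z hz
          fun_prop
        have h6 := meromorphicOrderAt_add (hg z) this.meromorphicAt
        have h7 := this.meromorphicOrderAt_nonneg
        have e : g' = g + (fun z => - (c * L.weierstrassP z ^ (n + 1))) := by
          funext z; simp [hg', sub_eq_add_neg]
        rw [e]
        exact (le_min h5 h7).trans h6)
      (by
        generalize meromorphicOrderAt g' 0 = o at h2 h3
        induction o with
        | top => simp
        | coe o => norm_cast at h2 h3 ⊢; omega)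
    refine ⟨A + Polynomial.C c * Polynomial.X ^ (n + 1), ?_⟩
    filter_upwards [hA] with z hz
    simp only [hg'] at hz
    simp
    linear_combination hz

lemma exists_reps (L L' : PeriodPair) (α : ℂ) (hα : α ≠ 0)
    (hsub : ∀ z ∈ L.lattice, α * z ∈ L'.lattice) :
    ∃ T : Finset ℂ, (∀ t ∈ T, t ∉ L.lattice) ∧
      ∀ z, z ∉ L.lattice → α * z ∈ L'.lattice → ∃ t ∈ T, z - t ∈ L.lattice := by
  classical
  have hb := ZSpan.fundamentalDomain_isBounded L.basis
  have hfin : (ZSpan.fundamentalDomain L.basis ∩ {z : ℂ | α * z ∈ L'.lattice}).Finite := by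
    have hb' : Bornology.IsBounded ((fun z => α * z) '' ZSpan.fundamentalDomain L.basis) := by
      exact hb.smul₀ α
    have hd : DiscreteTopology (L'.lattice : Set ℂ) := inferInstanceAs (DiscreteTopology L'.lattice)
    have hf := Metric.finite_isBounded_inter_isClosed (s := (L'.lattice : Set ℂ))
      ⟨hd⟩ hb' L'.isClosed_lattice
    refine Set.Finite.of_finite_image (f := fun z => α * z) (hf.subset ?_) ?_
    · rintro _ ⟨z, ⟨hz1, hz2⟩, rfl⟩
      exact ⟨⟨z, hz1, rfl⟩, hz2⟩
    · intro a _ b _ h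
      exact mul_left_cancel₀ hα h
  refine ⟨hfin.toFinset.filter (· ∉ L.lattice), ?_, ?_⟩
  · intro t ht
    exact (Finset.mem_filter.mp ht).2
  · intro z hz hz'
    have hfl : (ZSpan.floor L.basis z : ℂ) ∈ L.lattice := by
      rw [L.lattice_eq_span_range_basis]
      exact (ZSpan.floor L.basis z).2
    have hfr : z - ZSpan.fract L.basis z = (ZSpan.floor L.basis z : ℂ) := by
      rw [ZSpan.fract_apply]; ring
    refine ⟨ZSpan.fract L.basis z, ?_, by rw [hfr]; exact hfl⟩
    rw [Finset.mem_filter, Set.Finite.mem_toFinset]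
    refine ⟨⟨ZSpan.fract_mem_fundamentalDomain _ _, ?_⟩, fun h => hz ?_⟩
    · change α * ZSpan.fract L.basis z ∈ L'.lattice
      rw [ZSpan.fract_apply, mul_sub]
      exact sub_mem hz' (hsub _ hfl)
    · have := add_mem h hfl
      rwa [← hfr, add_sub_cancel] at this

lemma f_mero (L : PeriodPair) (α : ℂ) : Meromorphic (fun z => L.weierstrassP (α * z)) := by
  intro z
  exact (L.meromorphic_weierstrassP (α * z)).comp_analyticAt
    (f := L.weierstrassP) (g := fun z => α * z) (by fun_prop)

lemma f_an (L : PeriodPair) (α z : ℂ) (hz : α * z ∉ L.lattice) :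
    AnalyticAt ℂ (fun z => L.weierstrassP (α * z)) z :=
  AnalyticAt.fun_comp (f := fun z => α * z) (L.analyticOnNhd_weierstrassP _ hz) (by fun_prop)

lemma f_ord (L : PeriodPair) (α z : ℂ) (hα : α ≠ 0) (hz : α * z ∈ L.lattice) :
    meromorphicOrderAt (fun z => L.weierstrassP (α * z)) z = -2 := by
  rw [← L.order_weierstrassP _ hz]
  exact meromorphicOrderAt_comp_of_deriv_ne_zero (f := L.weierstrassP) (g := fun z => α * z)
    (x := z) (by fun_prop) (by simpa using hα)

open Topology Filter in
lemma rational_rel (L L' : PeriodPair) (α : ℂ) (hα : α ≠ 0)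
    (hsub : ∀ z ∈ L.lattice, α * z ∈ L'.lattice) :
    ∃ A B : Polynomial ℂ, B ≠ 0 ∧ ∀ᶠ z in 𝓝[≠] (0 : ℂ),
      A.eval (L.weierstrassP z) = B.eval (L.weierstrassP z) * L'.weierstrassP (α * z) := by
  obtain ⟨T, hT1, hT2⟩ := exists_reps L L' α hα hsub
  set P : Polynomial ℂ := ∏ t ∈ T, (Polynomial.X - Polynomial.C (L.weierstrassP t)) with hP
  have hP0 : P ≠ 0 := Finset.prod_ne_zero_iff.mpr fun t _ => Polynomial.X_sub_C_ne_zero _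
  have hm1 := polyP_mero L (P ^ 2)
  have hm1' := polyP_mero L P
  have hm2 := f_mero L' α
  have hgm : Meromorphic (fun z => (P ^ 2).eval (L.weierstrassP z) * L'.weierstrassP (α * z)) :=
    hm1.fun_mul hm2
  set g : ℂ → ℂ := fun z => (P ^ 2).eval (L.weierstrassP z) * L'.weierstrassP (α * z) with hg
  have hper : ∀ z, ∀ l ∈ L.lattice, g (z + l) = g z := by
    intro z l hl
    simp only [hg]
    rw [P_per L z l hl, mul_add, P_per L' _ _ (hsub l hl)]
  have hev : ∀ z, g (-z) = g z := by
    intro z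
    simp only [hg]
    rw [L.weierstrassP_neg, mul_neg, L'.weierstrassP_neg]
  have hord : ∀ z ∉ L.lattice, 0 ≤ meromorphicOrderAt g z := by
    intro z hz
    by_cases hz' : α * z ∈ L'.lattice
    · obtain ⟨t, ht, htz⟩ := hT2 z hz hz'
      have hpz : P.eval (L.weierstrassP z) = 0 := by
        rw [hP, Polynomial.eval_prod]
        refine Finset.prod_eq_zero ht ?_
        have := P_per L t _ htz
        rw [add_sub_cancel] at this
        simp [this]
      have han := polyP_an L P hz
      have hpos : 0 < meromorphicOrderAt (fun z => P.eval (L.weierstrassP z)) z := by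
        rw [← tendsto_zero_iff_meromorphicOrderAt_pos han.meromorphicAt]
        have := han.continuousAt.tendsto.mono_left (nhdsWithin_le_nhds (s := {z}ᶜ))
        rwa [hpz] at this
      have e : (fun z => (P ^ 2).eval (L.weierstrassP z)) =
          fun z => (P.eval (L.weierstrassP z)) ^ 2 := by
        funext z; simp
      rw [hg, fun_meromorphicOrderAt_mul (hm1 z) (hm2 z), f_ord L' α z hα hz', e,
        fun_meromorphicOrderAt_pow (hm1' z)]
      generalize meromorphicOrderAt (fun z => P.eval (L.weierstrassP z)) z = o at hpos
      induction o with
      | top => decide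
      | coe o =>
        have hpos' : (0 : ℤ) < o := WithTop.coe_lt_coe.mp hpos
        have e3 : ((2 : ℕ) : WithTop ℤ) * (o : WithTop ℤ) + -2 = ((2 * o + -2 : ℤ) : WithTop ℤ) := by
          rw [WithTop.coe_add, WithTop.coe_mul]; rfl
        rw [e3]
        exact WithTop.coe_le_coe.mpr (by omega)
    · exact ((polyP_an L _ hz).fun_mul (f_an L' α z hz')).meromorphicOrderAt_nonneg
  obtain ⟨n, hn⟩ : ∃ n : ℕ, ((-2 * n : ℤ) : WithTop ℤ) ≤ meromorphicOrderAt g 0 := by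
    generalize meromorphicOrderAt g 0 = o
    induction o with
    | top => exact ⟨0, le_top⟩
    | coe o => exact ⟨o.natAbs, WithTop.coe_le_coe.mpr (by omega)⟩
  obtain ⟨A, hA⟩ := even_poly L n g hgm hper hev hord hn
  refine ⟨A, P ^ 2, pow_ne_zero _ hP0, ?_⟩
  filter_upwards [hA] with z hz
  exact hz.symm

open Topology Filter in
lemma polyP_ord_ne_top (L : PeriodPair) (B : Polynomial ℂ) (hB : B ≠ 0) :
    meromorphicOrderAt (fun z => B.eval (L.weierstrassP z)) 0 ≠ ⊤ := by
  rw [meromorphicOrderAt_ne_top_iff_eventually_ne_zero (polyP_mero L B 0)]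
  have ht := tendsto_cobounded_of_meromorphicOrderAt_neg (f := L.weierstrassP) (x := 0) (by
    rw [L.order_weierstrassP 0 (zero_mem _)]; decide)
  have hfin : {x | B.eval x = 0}.Finite := by
    refine B.roots.toFinset.finite_toSet.subset fun x hx => ?_
    simpa [hB] using hx
  have := ht.eventually (Bornology.isBounded_def.mp hfin.isBounded)
  filter_upwards [this] with z hz using hz

open Topology Filter in
lemma final_step (M M' : PeriodPair) (β : ℂ) (hβ : β ≠ 0) (A B : Polynomial ℂ) (hB : B ≠ 0)
    (h : ∀ᶠ z in 𝓝[≠] (0 : ℂ),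
      A.eval (M.weierstrassP z) = B.eval (M.weierstrassP z) * M'.weierstrassP (β * z)) :
    ∀ m ∈ M.lattice, β * m ∈ M'.lattice := by
  intro m hm
  by_contra hc
  have mA := polyP_mero M A
  have mB := polyP_mero M B
  have mf := f_mero M' β
  have hH : Meromorphic (fun z => A.eval (M.weierstrassP z) -
    B.eval (M.weierstrassP z) * M'.weierstrassP (β * z)) := mA.fun_sub (mB.fun_mul mf)
  have h0 : meromorphicOrderAt (fun z => A.eval (M.weierstrassP z) -
    B.eval (M.weierstrassP z) * M'.weierstrassP (β * z)) 0 = ⊤ := by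
    rw [meromorphicOrderAt_eq_top_iff]
    filter_upwards [h] with z hz
    rw [hz, sub_self]
  have hmt : meromorphicOrderAt (fun z => A.eval (M.weierstrassP z) -
    B.eval (M.weierstrassP z) * M'.weierstrassP (β * z)) m = ⊤ := by
    by_contra hne
    exact MeromorphicOn.meromorphicOrderAt_ne_top_of_isPreconnected (U := Set.univ)
      (fun z _ => hH z) isPreconnected_univ (Set.mem_univ m) (Set.mem_univ 0) hne h0
  rw [meromorphicOrderAt_eq_top_iff] at hmt
  have e0 := meromorphicOrderAt_congr h
  have em : meromorphicOrderAt (fun z => A.eval (M.weierstrassP z)) m =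
      meromorphicOrderAt (fun z => B.eval (M.weierstrassP z) * M'.weierstrassP (β * z)) m := by
    apply meromorphicOrderAt_congr
    filter_upwards [hmt] with z hz
    exact sub_eq_zero.mp hz
  rw [fun_meromorphicOrderAt_mul (mB _) (mf _)] at e0 em
  rw [mord_add M _ (fun z l hl => by rw [P_per M z l hl]) m hm,
    mord_add M (fun z => B.eval (M.weierstrassP z)) (fun z l hl => by rw [P_per M z l hl]) m hm,
    e0, f_ord M' β 0 hβ (by simp)] at em
  have hnn := (f_an M' β m hc).meromorphicOrderAt_nonneg
  have hBt := polyP_ord_ne_top M B hB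
  have := WithTop.add_left_cancel hBt em
  rw [← this] at hnn
  revert hnn
  decide

open Topology Filter in
lemma wu_T (L : PeriodPair) : ∃ U : PowerSeries ℂ, HasT (wu L) U ∧
    PowerSeries.constantCoeff U = 1 ∧ wODE L.g₂ L.g₃ U = 0 := by
  obtain ⟨U, hU⟩ := HasT.exists (wu_analytic L)
  refine ⟨U, hU, ?_, ?_⟩
  · have := hU.2 0
    rw [iteratedDeriv_zero, wu_zero] at this
    simpa using this.symm
  · have h1 := (((((HasT.id.mul hU.deriv).add ((HasT.const (-2)).mul hU)).pow 2).add
      ((HasT.const (-4)).mul (hU.pow 3))).add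
      (((HasT.const L.g₂).mul (HasT.id.pow 4)).mul hU)).add ((HasT.const L.g₃).mul (HasT.id.pow 6))
    have h2 := h1.congr (g := fun _ => 0) (by
      filter_upwards [wu_ode L] with z hz using hz)
    have h3 := h2.unique (HasT.const 0)
    have e2 : (PowerSeries.C (-2 : ℂ)) = -2 := by rw [map_neg, map_ofNat]
    have e4 : (PowerSeries.C (-4 : ℂ)) = -4 := by rw [map_neg, map_ofNat]
    rw [e2, e4, map_zero] at h3
    rw [← h3, wODE]
    ring

lemma homEv_T (L : PeriodPair) (U : PowerSeries ℂ) (hU : HasT (wu L) U) (N : ℕ) (A : ℕ → ℂ) :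
    HasT (fun z => ∑ k ∈ Finset.range (N + 1), A k * (wu L z ^ k * z ^ (2 * (N - k))))
      (homEv N A U) := by
  unfold homEv
  exact HasT.sum _ fun k => (HasT.const (A k)).mul ((hU.pow k).mul (HasT.id.pow _))

lemma homEv_eval (L : PeriodPair) (N : ℕ) (A : ℕ → ℂ) (z : ℂ) (hz : z ≠ 0) :
    ∑ k ∈ Finset.range (N + 1), A k * (wu L z ^ k * z ^ (2 * (N - k))) =
      z ^ (2 * N) * ∑ k ∈ Finset.range (N + 1), A k * L.weierstrassP z ^ k := by
  rw [Finset.mul_sum]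
  refine Finset.sum_congr rfl fun k hk => ?_
  obtain ⟨d, rfl⟩ := Nat.exists_eq_add_of_le (Nat.lt_succ_iff.mp (Finset.mem_range.mp hk))
  rw [wu_eq L hz, Nat.add_sub_cancel_left]
  ring

open Topology Filter in
theorem abstract_main {F : Type*} [Field F] (i j : F →+* ℂ) (L L' M M' : PeriodPair)
    (a b a' b' α : F) (hα : α ≠ 0)
    (h1 : L.g₂ = i a) (h2 : L.g₃ = i b) (h3 : L'.g₂ = i a') (h4 : L'.g₃ = i b')
    (k1 : M.g₂ = j a) (k2 : M.g₃ = j b) (k3 : M'.g₂ = j a') (k4 : M'.g₃ = j b')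
    (hsub : ∀ z ∈ L.lattice, i α * z ∈ L'.lattice) :
    ∀ z ∈ M.lattice, j α * z ∈ M'.lattice := by
  have hiα : i α ≠ 0 := by simpa using hα
  have hjα : j α ≠ 0 := by simpa using hα
  obtain ⟨UL, tL, cL, oL⟩ := wu_T L
  obtain ⟨UL', tL', cL', oL'⟩ := wu_T L'
  obtain ⟨UM, tM, cM, oM⟩ := wu_T M
  obtain ⟨UM', tM', cM', oM'⟩ := wu_T M'
  rw [h1, h2] at oL
  rw [h3, h4] at oL'
  rw [k1, k2] at oM
  rw [k3, k4] at oM'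
  obtain ⟨V, hV, cV, oV⟩ := wODE_lift i a b UL cL oL
  obtain ⟨V', hV', cV', oV'⟩ := wODE_lift i a' b' UL' cL' oL'
  have hjV : PowerSeries.map j V = UM := by
    refine wODE_unique (j a) (j b) _ _ ?_ cM ?_ oM
    · rw [← PowerSeries.coeff_zero_eq_constantCoeff_apply, PowerSeries.coeff_map,
        PowerSeries.coeff_zero_eq_constantCoeff_apply, cV, map_one]
    · rw [← wODE_map, oV, map_zero]
  have hjV' : PowerSeries.map j V' = UM' := by
    refine wODE_unique (j a') (j b') _ _ ?_ cM' ?_ oM'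
    · rw [← PowerSeries.coeff_zero_eq_constantCoeff_apply, PowerSeries.coeff_map,
        PowerSeries.coeff_zero_eq_constantCoeff_apply, cV', map_one]
    · rw [← wODE_map, oV', map_zero]
  have hres : ∀ k : F →+* ℂ, PowerSeries.map k (PowerSeries.rescale α V') =
      PowerSeries.rescale (k α) (PowerSeries.map k V') := by
    intro k
    ext n
    simp [PowerSeries.coeff_rescale]
  obtain ⟨A, B, hB, hAB⟩ := rational_rel L L' (i α) hiα hsub
  set N := max A.natDegree B.natDegree with hN
  have key : PowerSeries.X ^ 2 * homEv N (fun k => (i α) ^ 2 * A.coeff k) (PowerSeries.map i V) =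
      homEv N (fun k => B.coeff k) (PowerSeries.map i V) *
        PowerSeries.map i (PowerSeries.rescale α V') := by
    rw [hres, hV, hV']
    have t1 := (HasT.id.pow 2).mul (homEv_T L UL tL N (fun k => (i α) ^ 2 * A.coeff k))
    have t2 := (homEv_T L UL tL N (fun k => B.coeff k)).mul (tL'.scale (i α))
    refine (t1.congr ?_).unique t2
    refine (AnalyticAt.frequently_eq_iff_eventually_eq t1.1 t2.1).mp (Eventually.frequently ?_)
    filter_upwards [hAB, self_mem_nhdsWithin] with z hz' h0
    · have h0 : z ≠ 0 := h0
      rw [homEv_eval L N _ z h0, homEv_eval L N _ z h0, wu_eq L' (mul_ne_zero hiα h0)]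
      rw [Polynomial.eval_eq_sum_range' (n := N + 1) (by omega),
        Polynomial.eval_eq_sum_range' (n := N + 1) (by omega)] at hz'
      simp_rw [mul_assoc ((i α) ^ 2)]
      rw [← Finset.mul_sum, hz']
      ring
  obtain ⟨A', B', hB', hk⟩ := homEv_descent i N _ _ V _ B.natDegree
    (by simpa using hB) key
  have hk2 := congrArg (PowerSeries.map j) hk
  rw [map_mul, map_mul, map_pow, PowerSeries.map_X, homEv_map, homEv_map, hres, hjV, hjV'] at hk2
  have t1 := (HasT.id.pow 2).mul (homEv_T M UM tM N (fun k => j (A' k)))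
  have t2 := (homEv_T M UM tM N (fun k => j (B' k))).mul (tM'.scale (j α))
  rw [← hk2] at t2
  have hev := t1.eventually_eq t2
  refine final_step M M' (j α) hjα
    (∑ k ∈ Finset.range (N + 1), Polynomial.C (((j α) ^ 2)⁻¹ * j (A' k)) * Polynomial.X ^ k)
    (∑ k ∈ Finset.range (N + 1), Polynomial.C (j (B' k)) * Polynomial.X ^ k) ?_ ?_
  · intro h
    have := congrArg (fun p => Polynomial.coeff p B.natDegree) h
    have hlt : B.natDegree < N + 1 := by omega
    simp [Polynomial.coeff_X_pow, hlt, hB'] at this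
  · rw [eventually_nhdsWithin_iff]
    filter_upwards [hev] with z hz h0
    have h0 : z ≠ 0 := h0
    rw [homEv_eval M N _ z h0, homEv_eval M N _ z h0, wu_eq M' (mul_ne_zero hjα h0)] at hz
    simp only [Polynomial.eval_finsetSum, Polynomial.eval_mul, Polynomial.eval_C,
      Polynomial.eval_pow, Polynomial.eval_X, mul_assoc]
    rw [← Finset.mul_sum, inv_mul_eq_iff_eq_mul₀ (pow_ne_zero _ hjα)]
    have hz2 : z ^ (2 * N + 2) ≠ 0 := pow_ne_zero _ h0
    apply mul_left_cancel₀ hz2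
    linear_combination hz

theorem abstract_main' {F : Type*} [CommRing F] (hF : IsField F) (i j : F →+* ℂ)
    (L L' M M' : PeriodPair)
    (a b a' b' α : F) (hα : α ≠ 0)
    (h1 : L.g₂ = i a) (h2 : L.g₃ = i b) (h3 : L'.g₂ = i a') (h4 : L'.g₃ = i b')
    (k1 : M.g₂ = j a) (k2 : M.g₃ = j b) (k3 : M'.g₂ = j a') (k4 : M'.g₃ = j b')
    (hsub : ∀ z ∈ L.lattice, i α * z ∈ L'.lattice) :
    ∀ z ∈ M.lattice, j α * z ∈ M'.lattice := by
  let _ : Field F := hF.toField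
  exact abstract_main i j L L' M M' a b a' b' α hα h1 h2 h3 h4 k1 k2 k3 k4 hsub

lemma exists_pp (Λ : AddSubgroup ℂ) (hd : DiscreteTopology Λ)
    (hs : Submodule.span ℝ (Λ : Set ℂ) = ⊤) :
    ∃ L : PeriodPair, ∀ z, z ∈ L.lattice ↔ z ∈ Λ := by
  let S : Submodule ℤ ℂ := AddSubgroup.toIntSubmodule Λ
  have i1 : DiscreteTopology S := hd
  have i2 : IsZLattice ℝ S := ⟨hs⟩
  have hfr : Module.finrank ℤ S = 2 := by
    rw [ZLattice.rank ℝ S, Complex.finrank_real_complex]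
  have i3 : Module.Free ℤ S := ZLattice.module_free ℝ S
  have i4 : Module.Finite ℤ S := ZLattice.module_finite ℝ S
  let b : Module.Basis (Fin 2) ℤ S := Module.finBasisOfFinrankEq ℤ S hfr
  let c := b.ofZLatticeBasis ℝ S
  have hc : ![(b 0 : ℂ), (b 1 : ℂ)] = c := by
    funext k
    fin_cases k <;> simp [c]
  refine ⟨⟨b 0, b 1, by rw [hc]; exact c.linearIndependent⟩, fun z => ?_⟩
  have h1 : Submodule.span ℤ (Set.range c) = S := b.ofZLatticeBasis_span ℝ S
  have h2 : z ∈ Λ ↔ z ∈ S := Iff.rfl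
  have h3 : z ∈ S ↔ z ∈ Submodule.span ℤ (Set.range ![(b 0 : ℂ), (b 1 : ℂ)]) := by
    rw [hc, h1]
  rw [h2, h3, PeriodPair.lattice]
  simp [Matrix.range_cons, Set.pair_comm]

lemma tsum_match (L : PeriodPair) (Λ : AddSubgroup ℂ) (h : ∀ z, z ∈ L.lattice ↔ z ∈ Λ) (n : ℕ)
    (hn : n ≠ 0) : ∑' w : {w : ℂ // w ∈ Λ ∧ w ≠ 0}, ((w : ℂ) ^ n)⁻¹ = L.G n := by
  rw [PeriodPair.G]
  symm
  refine tsum_eq_tsum_of_ne_zero_bij (fun x => ⟨x.1.1, (h _).mpr x.1.2.1⟩) ?_ ?_ ?_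
  · intro x y hxy
    apply Subtype.ext
    apply Subtype.ext
    simpa using hxy
  · intro x hx
    have hx0 : (x : ℂ) ≠ 0 := by
      intro h0
      simp [h0, hn] at hx
    exact ⟨⟨⟨x, (h _).mp x.2, hx0⟩, hx⟩, rfl⟩
  · intro x
    rfl

/-- Let `Λ, Λ'` be CM lattices (CM by `R = τ(𝓞 K)`) with algebraic `g₂, g₃`,
let `α ≠ 0` be algebraic with `α·Λ ⊆ Λ'`, let `σ` be a field automorphism of the field `ℚ̄` of
algebraic numbers (the integral closure of `ℚ` in `ℂ`), and let `M, M'` be lattices whose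
Eisenstein series are the `σ`-conjugates of those of `Λ, Λ'`.  Then `σ(α)·M ⊆ M'`. -/
theorem stmt_4
    (K : Type*) [Field K] [NumberField K]
    (hdeg : Module.finrank ℚ K = 2)
    (hcplx : IsEmpty (K →+* ℝ))
    (τ : K →+* ℂ)
    (σ : integralClosure ℚ ℂ ≃+* integralClosure ℚ ℂ)
    (Λ Λ' M M' : AddSubgroup ℂ)
    (hdiscΛ : DiscreteTopology Λ) (hdiscΛ' : DiscreteTopology Λ')
    (hdiscM : DiscreteTopology M) (hdiscM' : DiscreteTopology M')
    (hspanΛ : Submodule.span ℝ (Λ : Set ℂ) = ⊤)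
    (hspanΛ' : Submodule.span ℝ (Λ' : Set ℂ) = ⊤)
    (hspanM : Submodule.span ℝ (M : Set ℂ) = ⊤)
    (hspanM' : Submodule.span ℝ (M' : Set ℂ) = ⊤)
    (hCM : {z : ℂ | ∀ w ∈ Λ, z * w ∈ Λ} =
      Set.range fun a : 𝓞 K => τ (algebraMap (𝓞 K) K a))
    (hCM' : {z : ℂ | ∀ w ∈ Λ', z * w ∈ Λ'} =
      Set.range fun a : 𝓞 K => τ (algebraMap (𝓞 K) K a))
    (h2Λ : g₂ Λ ∈ integralClosure ℚ ℂ) (h3Λ : g₃ Λ ∈ integralClosure ℚ ℂ)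
    (h2Λ' : g₂ Λ' ∈ integralClosure ℚ ℂ) (h3Λ' : g₃ Λ' ∈ integralClosure ℚ ℂ)
    (α : ℂ) (hα0 : α ≠ 0) (hαalg : α ∈ integralClosure ℚ ℂ)
    (hsub : ∀ z ∈ Λ, α * z ∈ Λ')
    (hM2 : g₂ M = (σ ⟨g₂ Λ, h2Λ⟩ : ℂ)) (hM3 : g₃ M = (σ ⟨g₃ Λ, h3Λ⟩ : ℂ))
    (hM'2 : g₂ M' = (σ ⟨g₂ Λ', h2Λ'⟩ : ℂ)) (hM'3 : g₃ M' = (σ ⟨g₃ Λ', h3Λ'⟩ : ℂ)) :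
    ∀ m ∈ M, (σ ⟨α, hαalg⟩ : ℂ) * m ∈ M' := by
  obtain ⟨L, hL⟩ := exists_pp Λ hdiscΛ hspanΛ
  obtain ⟨L', hL'⟩ := exists_pp Λ' hdiscΛ' hspanΛ'
  obtain ⟨P, hP⟩ := exists_pp M hdiscM hspanM
  obtain ⟨P', hP'⟩ := exists_pp M' hdiscM' hspanM'
  have hg2 : ∀ (L : PeriodPair) (Λ : AddSubgroup ℂ), (∀ z, z ∈ L.lattice ↔ z ∈ Λ) →
      L.g₂ = g₂ Λ := by
    intro L Λ h
    rw [g₂, tsum_match L Λ h 4 (by norm_num), PeriodPair.g₂]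
  have hg3 : ∀ (L : PeriodPair) (Λ : AddSubgroup ℂ), (∀ z, z ∈ L.lattice ↔ z ∈ Λ) →
      L.g₃ = g₃ Λ := by
    intro L Λ h
    rw [g₃, tsum_match L Λ h 6 (by norm_num), PeriodPair.g₃]
  have hfield : IsField (integralClosure ℚ ℂ) :=
    isField_of_isIntegral_of_isField' (Field.toIsField ℚ)
  let i : integralClosure ℚ ℂ →+* ℂ := (integralClosure ℚ ℂ).val.toRingHom
  let j : integralClosure ℚ ℂ →+* ℂ := i.comp σ.toRingHom
  intro m hm
  have := abstract_main' hfield i j L L' P P' ⟨g₂ Λ, h2Λ⟩ ⟨g₃ Λ, h3Λ⟩ ⟨g₂ Λ', h2Λ'⟩ ⟨g₃ Λ', h3Λ'⟩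
    ⟨α, hαalg⟩ (fun h => hα0 (congrArg Subtype.val h))
    (hg2 L Λ hL) (hg3 L Λ hL) (hg2 L' Λ' hL') (hg3 L' Λ' hL')
    ((hg2 P M hP).trans hM2) ((hg3 P M hP).trans hM3)
    ((hg2 P' M' hP').trans hM'2) ((hg3 P' M' hP').trans hM'3)
    (fun z hz => (hL' _).mpr (hsub z ((hL z).mp hz))) m ((hP m).mpr hm)
  exact (hP' _).mp this
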